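/- Let G be a finite undirected unweighted simple graph, let R be a positive integer, and let B be a finite collection of pairs (c, r) with c a vertex and r an integer, r ≥ R, such that every vertex of G belongs to ball_G(c, r) for some (c, r) ∈ B. Let π be a shortest path in G from a vertex s to a vertex t. Then π can be written as a concatenation of consecutive subpaths α_1, α_2, …, α_l, where α_i goes from s_i to t_i (with s_1 = s, t_l = t, and s_{i+1} = t_i), and there exist pairwise distinct pairs (c_1, r_1), …, (c_l, r_l) ∈ B such that for each i: s_i ∈ ball_G(c_i, r_i), t_i ∈ ball_G(c_i, 2 r_i), every vertex of α_i lies in ball_G(c_i, 4 r_i), and moreover l ≤ |π| / R + 1, where |π| is the number of edges of π. -/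

import Mathlib

/-- The ball of radius `r` around `c` in the graph `G`. -/
def gball {V : Type} (G : SimpleGraph V) (c : V) (r : ℕ) : Set V :=
  {v | G.edist c v ≤ (r : ℕ∞)}

/-!
Cut `π` greedily: from the current vertex `x`, choose a ball of the cover containing `x` and jump
to the last vertex of `π` that lies in the ball of twice the radius around the same centre. If the
jump does not reach the end of `π`, then it has length at least the radius, which bounds the number
of pieces, and no vertex from the landing point up to the last but one of `π` lies in the ball
itself, since its successor would still be in the doubled ball; hence no ball is chosen twice. As
`π` is shortest, a piece has at most three radii of edges, so each of its vertices is within two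
radii of its start or one radius of its end.
-/

section

open SimpleGraph

variable {V : Type*} {G : SimpleGraph V} {s t : V}

theorem edist_le_of_edist_le_of_add_le {c x y : V} {r d e : ℕ} (hcx : G.edist c x ≤ r)
    (hxy : G.edist x y ≤ d) (hrd : r + d ≤ e) : G.edist c y ≤ e :=
  calc G.edist c y ≤ G.edist c x + G.edist x y := G.edist_triangle
    _ ≤ r + d := add_le_add hcx hxy
    _ ≤ e := mod_cast hrd

theorem edist_getVert_getVert_le (π : G.Walk s t) {m n : ℕ} (hmn : m ≤ n) :
    G.edist (π.getVert m) (π.getVert n) ≤ (n - m : ℕ) := by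
  have hn : (π.drop m).getVert (n - m) = π.getVert n := by
    rw [Walk.drop_getVert, Nat.add_sub_cancel' hmn]
  calc G.edist (π.getVert m) (π.getVert n)
      ≤ ((π.drop m).take (n - m)).length := hn ▸ edist_le _
    _ ≤ (n - m : ℕ) := mod_cast (Walk.take_length _ _).trans_le (min_le_left _ _)

theorem le_edist_getVert_getVert {π : G.Walk s t} (hπ : π.length = G.dist s t) {m n : ℕ}
    (hmn : m ≤ n) (hn : n ≤ π.length) :
    ((n - m : ℕ) : ℕ∞) ≤ G.edist (π.getVert m) (π.getVert n) := by
  refine le_iInf fun q => ?_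
  have hdetour := dist_le ((π.take m).append (q.append (π.drop n)))
  simp only [Walk.length_append, Walk.take_length, Walk.drop_length] at hdetour
  exact mod_cast (by omega : n - m ≤ q.length)

theorem edist_getVert_le_add_of_mem_Icc {π : G.Walk s t} (hπ : π.length = G.dist s t)
    {c : V} {r r' a b m : ℕ} (hb : b ≤ π.length) (hca : G.edist c (π.getVert a) ≤ r)
    (hcb : G.edist c (π.getVert b) ≤ r') (hm : m ∈ Set.Icc a b) :
    G.edist c (π.getVert m) ≤ (r + r' : ℕ) := by
  obtain ⟨ham, hmb⟩ := hm
  have hab : b - a ≤ r + r' := by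
    have hac : G.edist (π.getVert a) c ≤ r := edist_comm.trans_le hca
    have h := edist_le_of_edist_le_of_add_le hac hcb le_rfl
    exact mod_cast (le_edist_getVert_getVert hπ (ham.trans hmb) hb).trans h
  rcases le_total (m - a) r' with hnear | hfar
  · exact edist_le_of_edist_le_of_add_le hca (edist_getVert_getVert_le π ham) (by omega)
  · have hbm := edist_comm.trans_le (edist_getVert_getVert_le π hmb)
    exact edist_le_of_edist_le_of_add_le hcb hbm (by omega)

open Classical in
/-- The position on `π` of its last vertex in the ball of radius `r` around `c`; it is `0` if `π`
does not meet that ball. -/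
noncomputable def lastVisit (π : G.Walk s t) (c : V) (r : ℕ) : ℕ :=
  Nat.findGreatest (fun k => G.edist c (π.getVert k) ≤ r) π.length

variable {π : G.Walk s t} {c : V} {r m : ℕ}

theorem lastVisit_le_length (π : G.Walk s t) (c : V) (r : ℕ) : lastVisit π c r ≤ π.length :=
  Nat.findGreatest_le _

theorem le_lastVisit (hm : m ≤ π.length) (hcm : G.edist c (π.getVert m) ≤ r) :
    m ≤ lastVisit π c r :=
  Nat.le_findGreatest hm hcm

open Classical in
theorem edist_getVert_lastVisit_le (hm : m ≤ π.length) (hcm : G.edist c (π.getVert m) ≤ r) :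
    G.edist c (π.getVert (lastVisit π c r)) ≤ r :=
  Nat.findGreatest_spec (P := fun k => G.edist c (π.getVert k) ≤ r) hm hcm

theorem le_lastVisit_of_le_add {r' n : ℕ} (hcm : G.edist c (π.getVert m) ≤ r) (hmn : m ≤ n)
    (hn : n ≤ π.length) (hr : r + (n - m) ≤ r') : n ≤ lastVisit π c r' :=
  le_lastVisit hn (edist_le_of_edist_le_of_add_le hcm (edist_getVert_getVert_le π hmn) hr)

/-- The breakpoints of the greedy partition of `π`, as positions on `π`. The pair `host n` is the
centre and radius of the ball chosen to contain the `n`-th vertex of `π`, and each piece runs up to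
the last vertex of `π` in the ball of twice that radius. The sequence is constant once it reaches
the end of `π`. -/
noncomputable def greedyCut (π : G.Walk s t) (host : ℕ → V × ℕ) : ℕ → ℕ
  | 0 => 0
  | i + 1 => lastVisit π (host (greedyCut π host i)).1 (2 * (host (greedyCut π host i)).2)

variable {host : ℕ → V × ℕ}

theorem greedyCut_le_length (π : G.Walk s t) (host : ℕ → V × ℕ) (i : ℕ) :
    greedyCut π host i ≤ π.length := by
  cases i with
  | zero => exact Nat.zero_le _
  | succ i => exact lastVisit_le_length _ _ _

theorem greedyCut_monotone
    (hhost : ∀ n, G.edist (host n).1 (π.getVert n) ≤ (host n).2) :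
    Monotone (greedyCut π host) :=
  monotone_nat_of_le_succ fun i =>
    le_lastVisit_of_le_add (hhost _) le_rfl (greedyCut_le_length π host i) (by omega)

theorem edist_getVert_greedyCut_succ_le
    (hhost : ∀ n, G.edist (host n).1 (π.getVert n) ≤ (host n).2) (i : ℕ) :
    G.edist (host (greedyCut π host i)).1 (π.getVert (greedyCut π host (i + 1))) ≤
      (2 * (host (greedyCut π host i)).2 : ℕ) :=
  edist_getVert_lastVisit_le (greedyCut_le_length π host i)
    ((hhost _).trans (mod_cast Nat.le_mul_of_pos_left _ two_pos))

theorem edist_getVert_le_of_mem_Icc_greedyCut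
    (hhost : ∀ n, G.edist (host n).1 (π.getVert n) ≤ (host n).2)
    (hπ : π.length = G.dist s t) {i m : ℕ}
    (hm : m ∈ Set.Icc (greedyCut π host i) (greedyCut π host (i + 1))) :
    G.edist (host (greedyCut π host i)).1 (π.getVert m) ≤
      (3 * (host (greedyCut π host i)).2 : ℕ) :=
  (edist_getVert_le_add_of_mem_Icc hπ (greedyCut_le_length π host (i + 1)) (hhost _)
    (edist_getVert_greedyCut_succ_le hhost i) hm).trans (mod_cast (by omega))

theorem host_greedyCut_ne
    (hhost : ∀ n, G.edist (host n).1 (π.getVert n) ≤ (host n).2)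
    (hpos : ∀ n, 0 < (host n).2) {i k : ℕ} (hik : i < k)
    (hk : greedyCut π host k < π.length) :
    host (greedyCut π host i) ≠ host (greedyCut π host k) := by
  intro heq
  have hball : G.edist (host (greedyCut π host i)).1 (π.getVert (greedyCut π host k)) ≤
      (host (greedyCut π host i)).2 := by
    rw [heq]
    exact hhost _
  have hposi := hpos (greedyCut π host i)
  have hbeyond : greedyCut π host k + 1 ≤ greedyCut π host (i + 1) :=
    le_lastVisit_of_le_add hball (Nat.le_succ _) hk (by omega)
  have hnext : greedyCut π host (i + 1) ≤ greedyCut π host k := greedyCut_monotone hhost hik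
  omega

theorem min_length_greedyCut_add_le_greedyCut_succ {R : ℕ}
    (hhost : ∀ n, G.edist (host n).1 (π.getVert n) ≤ (host n).2)
    (hR : ∀ n, R ≤ (host n).2) (i : ℕ) :
    min π.length (greedyCut π host i + R) ≤ greedyCut π host (i + 1) := by
  have hi := greedyCut_le_length π host i
  have hRi := hR (greedyCut π host i)
  exact le_lastVisit_of_le_add (hhost _) (by omega) (min_le_left _ _) (by omega)

theorem min_length_mul_le_greedyCut {R : ℕ}
    (hhost : ∀ n, G.edist (host n).1 (π.getVert n) ≤ (host n).2)
    (hR : ∀ n, R ≤ (host n).2) (i : ℕ) :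
    min π.length (i * R) ≤ greedyCut π host i := by
  induction i with
  | zero => simp
  | succ i ih =>
    have hstep := min_length_greedyCut_add_le_greedyCut_succ hhost hR i
    rw [Nat.add_mul]
    omega

theorem exists_greedyCut_succ_eq_length {R : ℕ}
    (hhost : ∀ n, G.edist (host n).1 (π.getVert n) ≤ (host n).2)
    (hR : ∀ n, R ≤ (host n).2) (hRpos : 0 < R) :
    ∃ m, greedyCut π host (m + 1) = π.length ∧ (∀ i < m, greedyCut π host (i + 1) < π.length) ∧
      m * R ≤ π.length := by
  have hends : ∃ m, greedyCut π host (m + 1) = π.length := by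
    have hlower := min_length_mul_le_greedyCut (π := π) hhost hR (π.length + 1)
    have hfar : π.length ≤ (π.length + 1) * R := by nlinarith
    exact ⟨π.length, (greedyCut_le_length π host _).antisymm ((min_eq_left hfar).ge.trans hlower)⟩
  have hbefore : ∀ i < Nat.find hends, greedyCut π host (i + 1) < π.length := fun i hi =>
    (greedyCut_le_length π host _).lt_of_ne (Nat.find_min hends hi)
  refine ⟨Nat.find hends, Nat.find_spec hends, hbefore, ?_⟩
  cases hm : Nat.find hends with
  | zero => simp
  | succ m =>
    have hlower := min_length_mul_le_greedyCut (π := π) hhost hR (m + 1)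
    have hlast := hbefore m (by omega)
    omega

end

theorem path_partition_general {V : Type*} {G : SimpleGraph V} {R : ℕ} (hR : 0 < R)
    {B : Set (V × ℕ)} (hrad : ∀ p ∈ B, R ≤ p.2) {s t : V} (π : G.Walk s t)
    (hcover : ∀ v ∈ π.support, ∃ p ∈ B, G.edist p.1 v ≤ p.2) (hshort : π.length = G.dist s t) :
    ∃ (l : ℕ) (j : Fin (l + 1) → ℕ) (c : Fin l → V) (rr : Fin l → ℕ),
      1 ≤ l ∧
      j 0 = 0 ∧
      j (Fin.last l) = π.length ∧
      (∀ i : Fin l, j i.castSucc ≤ j i.succ) ∧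
      Function.Injective (fun i : Fin l => (c i, rr i)) ∧
      (∀ i : Fin l,
        (c i, rr i) ∈ B ∧
        G.edist (c i) (π.getVert (j i.castSucc)) ≤ rr i ∧
        G.edist (c i) (π.getVert (j i.succ)) ≤ (2 * rr i : ℕ) ∧
        ∀ m : ℕ, j i.castSucc ≤ m → m ≤ j i.succ →
          G.edist (c i) (π.getVert m) ≤ (3 * rr i : ℕ)) ∧
      (l : ℝ) ≤ (π.length : ℝ) / (R : ℝ) + 1 := by
  choose host hostB hhost using fun n => hcover _ (π.getVert_mem_support n)
  have hhostR : ∀ n, R ≤ (host n).2 := fun n => hrad _ (hostB n)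
  obtain ⟨m, hend, hbefore, hmR⟩ := exists_greedyCut_succ_eq_length hhost hhostR hR
  let cut := greedyCut π host
  refine ⟨m + 1, fun i => cut i, fun i => (host (cut i)).1, fun i => (host (cut i)).2,
    Nat.le_add_left 1 m, rfl, hend, fun i => greedyCut_monotone hhost (Nat.le_succ i), ?_,
    fun i => ⟨hostB _, hhost _, edist_getVert_greedyCut_succ_le hhost i, fun n hn hn' =>
      edist_getVert_le_of_mem_Icc_greedyCut hhost hshort ⟨hn, hn'⟩⟩, ?_⟩
  · refine .of_lt_imp_ne fun i k hik => ?_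
    obtain ⟨k', hk'⟩ := Nat.exists_eq_add_one_of_ne_zero (Nat.ne_zero_of_lt hik)
    have hk : cut k < π.length := hk' ▸ hbefore k' (by omega)
    exact host_greedyCut_ne hhost (fun n => hR.trans_le (hhostR n)) hik hk
  · push_cast
    gcongr
    rw [le_div_iff₀ (mod_cast hR)]
    exact mod_cast hmR

/-- **Path partitioning by balls.** Let `B` be a collection of balls of radius
at least `R` covering all vertices of `G`, and let `π` be a shortest path from
`s` to `t`. Then `π` can be partitioned into consecutive subpaths
`α_1, …, α_l` (given by breakpoint positions `j 0 = 0 ≤ j 1 ≤ … ≤ j l = |π|`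
along `π`, with the `i`-th subpath going from `s_i = π.getVert (j (i-1))` to
`t_i = π.getVert (j i)`), hosted by pairwise distinct balls
`(c_i, r_i) ∈ B` with `s_i ∈ ball(c_i, r_i)`, `t_i ∈ ball(c_i, 2 r_i)`, every
vertex of `α_i` in `ball(c_i, 4 r_i)`, and `l ≤ |π| / R + 1`. -/
theorem path_partition (V : Type) [Fintype V] (G : SimpleGraph V)
    (R : ℕ) (hR : 0 < R) (B : Finset (V × ℕ))
    (hrad : ∀ p ∈ B, R ≤ p.2)
    (hcover : ∀ v : V, ∃ p ∈ B, v ∈ gball G p.1 p.2)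
    (s t : V) (π : G.Walk s t) (hpath : π.IsPath)
    (hshort : π.length = G.dist s t) :
    ∃ (l : ℕ) (j : Fin (l + 1) → ℕ) (c : Fin l → V) (rr : Fin l → ℕ),
      1 ≤ l ∧
      j 0 = 0 ∧
      j (Fin.last l) = π.length ∧
      (∀ i : Fin l, j i.castSucc ≤ j i.succ) ∧
      Function.Injective (fun i : Fin l => (c i, rr i)) ∧
      (∀ i : Fin l,
        (c i, rr i) ∈ B ∧
        π.getVert (j i.castSucc) ∈ gball G (c i) (rr i) ∧
        π.getVert (j i.succ) ∈ gball G (c i) (2 * rr i) ∧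
        ∀ m : ℕ, j i.castSucc ≤ m → m ≤ j i.succ →
          π.getVert m ∈ gball G (c i) (4 * rr i)) ∧
      (l : ℝ) ≤ (π.length : ℝ) / (R : ℝ) + 1 := by
  obtain ⟨l, j, c, rr, hl, h0, hlast, hmono, hinj, hball, hcard⟩ :=
    path_partition_general hR (B := B) hrad π (fun v _ => hcover v) hshort
  exact ⟨l, j, c, rr, hl, h0, hlast, hmono, hinj, fun i => (hball i).imp_right <| .imp_right <|
    .imp_right fun h m hm hm' => (h m hm hm').trans (mod_cast (by omega)), hcard⟩
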